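/- arXiv:1210.2214 — 2 statements merged into one kernel-verified Lean document; each statement's English description precedes it below -/
import Mathlib

section
/- Let 0 ≤ m < n be integers. Then sdepth_S((x_1,...,x_n)/(x_1,...,x_m)) = n - m - ⌊(n-m)/2⌋. -/
/- Combinatorial formalization of Stanley depth for quotients `J/I` of monomial
ideals in `S = K[x_1,...,x_n]`: monomials are identified with their exponent
vectors in `Fin n → ℕ`, the `ℤⁿ`-graded module `J/I` is identified with the set
of exponent vectors of monomials in `J \ I`, and a Stanley decomposition
`⊕ uᵢ K[Zᵢ]` is identified with a partition of this set into "intervals"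
`{b | aᵢ ≤ b ∧ (b = aᵢ outside Zᵢ)}` (the exponent set of `x^{aᵢ} K[Zᵢ]`).
This correspondence is exact and the resulting Stanley depth is independent of
the field `K`. `sdepthOn V M` is the Stanley depth of `M` as a module over the
polynomial subring on the variables in `V` (e.g. `S' = K[x_2,...,x_n]`). -/

/-- The set of exponent vectors of the Stanley space `x^a · K[Z]`. -/
def SInterval {n : ℕ} (a : Fin n → ℕ) (Z : Finset (Fin n)) : Set (Fin n → ℕ) :=
  {b | a ≤ b ∧ ∀ i ∉ Z, b i = a i}

/-- A (combinatorial) Stanley decomposition of the set `M` of exponent vectors,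
using only variables from `V`. -/
def IsStanleyDecompOn {n : ℕ} (V : Finset (Fin n)) (M : Set (Fin n → ℕ)) {r : ℕ}
    (a : Fin r → Fin n → ℕ) (Z : Fin r → Finset (Fin n)) : Prop :=
  (∀ i, Z i ⊆ V) ∧ (∀ i, SInterval (a i) (Z i) ⊆ M) ∧
    (∀ x ∈ M, ∃ i, x ∈ SInterval (a i) (Z i)) ∧
    ∀ i j, i ≠ j → Disjoint (SInterval (a i) (Z i)) (SInterval (a j) (Z j))

/-- The Stanley depth of `M`, viewed over the polynomial ring on the variables in `V`. -/
noncomputable def sdepthOn {n : ℕ} (V : Finset (Fin n)) (M : Set (Fin n → ℕ)) : ℕ :=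
  sSup {d | ∃ (r : ℕ), 0 < r ∧ ∃ (a : Fin r → Fin n → ℕ) (Z : Fin r → Finset (Fin n)),
    IsStanleyDecompOn V M a Z ∧ ∀ i, d ≤ (Z i).card}

/-- The Stanley depth over the full polynomial ring `S = K[x_1,...,x_n]`. -/
noncomputable def sdepth {n : ℕ} (M : Set (Fin n → ℕ)) : ℕ := sdepthOn Finset.univ M

/-- Exponent vectors of the monomial ideal generated by the monomials `x^a`, `a ∈ A`. -/
def upSet {n : ℕ} (A : Set (Fin n → ℕ)) : Set (Fin n → ℕ) := {c | ∃ a ∈ A, a ≤ c}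

/-- `M` is the set of exponent vectors of the monomials of a monomial ideal. -/
def IsMonomialIdealSet {n : ℕ} (M : Set (Fin n → ℕ)) : Prop :=
  ∀ a ∈ M, ∀ b, a ≤ b → b ∈ M

/-- All monomials of `M` only involve the variables in `V`. -/
def SupportedOn {n : ℕ} (V : Finset (Fin n)) (M : Set (Fin n → ℕ)) : Prop :=
  ∀ c ∈ M, ∀ i ∉ V, c i = 0

/-- The support of a monomial. -/
def msupp {n : ℕ} (u : Fin n → ℕ) : Finset (Fin n) :=
  Finset.univ.filter fun i => u i ≠ 0

/-- A regular sequence of monomials: monic nonunit monomials with pairwise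
disjoint supports. -/
def IsRegSeqM {n m : ℕ} (u : Fin m → Fin n → ℕ) : Prop :=
  (∀ j, u j ≠ 0) ∧ ∀ j k, j ≠ k → Disjoint (msupp (u j)) (msupp (u k))


/-- `q` solves the (antiperiodic) next-parity recursion for the set `A` on `[m, n)`. -/
def SolQ (m n : ℕ) (A : Set ℕ) (q : ℕ → Bool) : Prop :=
  (∀ j, m ≤ j → j < n → (j ∈ A → q j = j.bodd) ∧ (j ∉ A → q j = q (j + 1))) ∧ q n = !q m

theorem fwd_ne {m n : ℕ} {A : Set ℕ} {q q' : ℕ → Bool}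
    (h : ∀ j, m ≤ j → j < n → (j ∈ A → q j = j.bodd) ∧ (j ∉ A → q j = q (j + 1)))
    (h' : ∀ j, m ≤ j → j < n → (j ∈ A → q' j = j.bodd) ∧ (j ∉ A → q' j = q' (j + 1)))
    (h0 : q m ≠ q' m) : ∀ j, m ≤ j → j ≤ n → q j ≠ q' j := by
  intro j hj
  induction j, hj using Nat.le_induction with
  | base => intro _; exact h0
  | succ j hj ih =>
    intro hn
    have h1 := ih (by omega)
    have a := h j hj (by omega)
    have b := h' j hj (by omega)
    by_cases hA : j ∈ A
    · exact absurd ((a.1 hA).trans (b.1 hA).symm) h1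
    · rw [← a.2 hA, ← b.2 hA]; exact h1

theorem fwd_eq {m n : ℕ} {A : Set ℕ} {q q' : ℕ → Bool}
    (h : ∀ j, m ≤ j → j < n → (j ∈ A → q j = j.bodd) ∧ (j ∉ A → q j = q (j + 1)))
    (h' : ∀ j, m ≤ j → j < n → (j ∈ A → q' j = j.bodd) ∧ (j ∉ A → q' j = q' (j + 1)))
    (hA : ∃ j ∈ A, m ≤ j ∧ j < n) : q m = q' m := by
  by_contra h0
  obtain ⟨j, hjA, hj, hn⟩ := hA
  exact fwd_ne h h' h0 j hj hn.le (((h j hj hn).1 hjA).trans ((h' j hj hn).1 hjA).symm)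

theorem SolQ.unique {m n : ℕ} {A : Set ℕ} {q q' : ℕ → Bool} (h : SolQ m n A q)
    (h' : SolQ m n A q') (hA : ∃ j ∈ A, m ≤ j ∧ j < n) :
    ∀ j, m ≤ j → j ≤ n → q j = q' j := by
  have h0 := fwd_eq h.1 h'.1 hA
  have hn : q n = q' n := by rw [h.2, h'.2, h0]
  have key : ∀ t j, j + t = n → m ≤ j → q j = q' j := by
    intro t
    induction t with
    | zero => intro j hj _; simp at hj; rw [hj]; exact hn
    | succ t ih =>
      intro j hj hm
      have a := h.1 j hm (by omega)
      have b := h'.1 j hm (by omega)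
      by_cases hA : j ∈ A
      · rw [a.1 hA, b.1 hA]
      · rw [a.2 hA, b.2 hA]; exact ih (j + 1) (by omega) (by omega)
  intro j hm hj
  exact key (n - j) j (by omega) hm

theorem exists_rec (n : ℕ) (A : Set ℕ) (b : Bool) : ∃ q : ℕ → Bool,
    (∀ j, j < n → (j ∈ A → q j = j.bodd) ∧ (j ∉ A → q j = q (j + 1))) ∧ q n = b := by
  classical
  let g : ℕ → Bool := fun t => Nat.rec b (fun t r => if (n - (t + 1)) ∈ A then (n - (t + 1)).bodd else r) t
  refine ⟨fun j => g (n - j), ?_, ?_⟩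
  · intro j hj
    obtain ⟨t, rfl⟩ : ∃ t, n = j + (t + 1) := ⟨n - j - 1, by omega⟩
    have e1 : j + (t + 1) - j = t + 1 := by omega
    have e2 : j + (t + 1) - (j + 1) = t := by omega
    have e3 : j + (t + 1) - (t + 1) = j := by omega
    have e : g (t + 1) = if j ∈ A then j.bodd else g t := by
      change (if (j + (t + 1) - (t + 1)) ∈ A then (j + (t + 1) - (t + 1)).bodd else g t) = _
      rw [e3]
    simp only [e1, e2, e]
    constructor <;> intro h <;> simp [h]
  · simp [g]

theorem exists_SolQ {m n : ℕ} {A : Set ℕ} (hA : ∃ j ∈ A, m ≤ j ∧ j < n) :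
    ∃ q, SolQ m n A q := by
  obtain ⟨q, h, hq⟩ := exists_rec n A true
  obtain ⟨q', h', hq'⟩ := exists_rec n A false
  have e := fwd_eq (m := m) (fun j _ => h j) (fun j _ => h' j) hA
  cases hb : q m
  · exact ⟨q, fun j _ => h j, by rw [hq, hb]; rfl⟩
  · exact ⟨q', fun j _ => h' j, by rw [hq', ← e, hb]; rfl⟩

/-- admissible parity functions -/
def ValidQ (m n : ℕ) (q : ℕ → Bool) : Prop :=
  (∀ j, m ≤ j → j < n → q j ≠ q (j + 1) → q j = j.bodd) ∧ q n = !q m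

/-- lower end of the interval -/
def XQ (m n : ℕ) (q : ℕ → Bool) : Finset (Fin n) :=
  Finset.univ.filter fun j => m ≤ (j : ℕ) ∧ q j ≠ q (j + 1)

/-- upper end of the interval -/
def YQ (m n : ℕ) (q : ℕ → Bool) : Finset (Fin n) :=
  Finset.univ.filter fun j => m ≤ (j : ℕ) ∧ q j = (j : ℕ).bodd

theorem ValidQ.exists_X {m n : ℕ} {q : ℕ → Bool} (h : ValidQ m n q) (hmn : m < n) :
    ∃ j, m ≤ j ∧ j < n ∧ q j ≠ q (j + 1) := by
  by_contra! hc
  have : ∀ j, m ≤ j → j ≤ n → q j = q m := by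
    intro j hj
    induction j, hj using Nat.le_induction with
    | base => intro _; rfl
    | succ j hj ih => intro hn; rw [← hc j hj (by omega)]; exact ih (by omega)
  have h1 := this n hmn.le le_rfl
  rw [h.2] at h1
  cases hb : q m <;> simp [hb] at h1

theorem card_YQ {m n : ℕ} {q : ℕ → Bool} (h : ValidQ m n q) (hmn : m < n) :
    n - m - (n - m) / 2 ≤ (YQ m n q).card := by
  set Y := (Finset.Ico m n).filter fun j => q j = j.bodd with hY
  set N := (Finset.Ico m n).filter fun j => ¬ q j = j.bodd with hN
  have e1 : (YQ m n q).card = Y.card := by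
    rw [← Finset.card_map Fin.valEmbedding]
    congr 1
    ext j
    simp only [YQ, Finset.mem_map, Finset.mem_filter, Finset.mem_univ, true_and, hY,
      Finset.mem_Ico, Fin.valEmbedding_apply]
    constructor
    · rintro ⟨i, ⟨h1, h2⟩, rfl⟩; exact ⟨⟨h1, i.2⟩, h2⟩
    · rintro ⟨⟨h1, h3⟩, h2⟩; exact ⟨⟨j, h3⟩, ⟨h1, h2⟩, rfl⟩
  have e2 : Y.card + N.card = n - m := by
    rw [hY, hN, Finset.card_filter_add_card_filter_not, Nat.card_Ico]
  have step : ∀ j ∈ N, q (j + 1) = (j + 1).bodd := by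
    intro j hj
    simp only [hN, Finset.mem_filter, Finset.mem_Ico] at hj
    have h1 : q j = q (j + 1) := by
      by_contra hc
      exact hj.2 (h.1 j hj.1.1 hj.1.2 hc)
    rw [← h1, Nat.bodd_succ]
    have := hj.2
    revert this
    cases q j <;> cases j.bodd <;> simp
  rcases Nat.even_or_odd (n - m) with he | ho
  · have h3 : (N.erase (n - 1)).card ≤ Y.card := by
      apply Finset.card_le_card_of_injOn (fun j => j + 1)
      · intro j hj
        have hj' := Finset.mem_erase.1 (Finset.mem_coe.1 hj)
        have h4 := step j hj'.2
        have h5 := hj'.2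
        simp only [hN, Finset.mem_filter, Finset.mem_Ico] at h5
        simp only [hY, Finset.coe_filter, Finset.mem_Ico, Set.mem_ofPred_eq]
        exact ⟨by omega, h4⟩
      · intro a _ b _ hab; simpa using hab
    have h4 := Finset.pred_card_le_card_erase (s := N) (a := n - 1)
    obtain ⟨t, ht⟩ := he
    omega
  · have h3 : N.card ≤ Y.card := by
      apply Finset.card_le_card_of_injOn (fun j => if j + 1 = n then m else j + 1)
      · intro j hj
        have h4 := step j hj
        have h5 := Finset.mem_coe.1 hj
        simp only [hN, Finset.mem_filter, Finset.mem_Ico] at h5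
        simp only [hY, Finset.coe_filter, Finset.mem_Ico, Set.mem_ofPred_eq]
        by_cases hjn : j + 1 = n
        · simp only [hjn, if_true]
          refine ⟨by omega, ?_⟩
          rw [hjn, h.2] at h4
          have h6 : n.bodd = !m.bodd := by
            have : n = m + (n - m) := by omega
            rw [this, Nat.bodd_add]
            obtain ⟨t, ht⟩ := ho
            rw [ht, Nat.bodd_add, Nat.bodd_mul, Nat.bodd_two]; simp
          rw [h6] at h4
          simpa using h4
        · simp only [hjn, if_false]
          exact ⟨by omega, h4⟩
      · intro a ha b hb hab
        have ha := Finset.mem_coe.1 ha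
        have hb := Finset.mem_coe.1 hb
        simp only [hN, Finset.mem_filter, Finset.mem_Ico] at ha hb
        simp only at hab
        split_ifs at hab <;> omega
    omega

/-- The exponent vectors of the quotient. -/
abbrev MM (n m : ℕ) : Set (Fin n → ℕ) :=
  {c : Fin n → ℕ | c ≠ 0} \ {c | ∃ i : Fin n, (i : ℕ) < m ∧ 0 < c i}

/-- indicator -/
def ind {n : ℕ} (X : Finset (Fin n)) : Fin n → ℕ := fun i => if i ∈ X then 1 else 0

theorem mem_SInterval_ind {n : ℕ} {X Y : Finset (Fin n)} (hXY : X ⊆ Y) (c : Fin n → ℕ) :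
    c ∈ SInterval (ind X) Y ↔ (∀ i ∈ X, c i ≠ 0) ∧ ∀ i, c i ≠ 0 → i ∈ Y := by
  unfold SInterval ind
  simp only [Set.mem_ofPred_eq, Pi.le_def]
  constructor
  · rintro ⟨h1, h2⟩
    refine ⟨fun i hi => ?_, fun i hi => ?_⟩
    · have := h1 i
      simp [hi] at this; omega
    · by_contra hc
      have := h2 i hc
      have hx : i ∉ X := fun h => hc (hXY h)
      simp [hx] at this; exact hi this
  · rintro ⟨h1, h2⟩
    refine ⟨fun i => ?_, fun i hi => ?_⟩
    · split_ifs with h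
      · have := h1 i h; omega
      · omega
    · have hx : i ∉ X := fun h => hi (hXY h)
      simp only [hx, if_false]
      by_contra hc
      exact hi (h2 i hc)

theorem XQ_sub_YQ {m n : ℕ} {q : ℕ → Bool} (h : ValidQ m n q) : XQ m n q ⊆ YQ m n q := by
  intro j hj
  simp only [XQ, YQ, Finset.mem_filter, Finset.mem_univ, true_and] at hj ⊢
  exact ⟨hj.1, h.1 j hj.1 j.2 hj.2⟩

/-- support as a set of naturals -/
def suppN {n : ℕ} (c : Fin n → ℕ) : Set ℕ := {j | ∃ h : j < n, c ⟨j, h⟩ ≠ 0}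

theorem SolQ_of_mem {m n : ℕ} {q : ℕ → Bool} (h : ValidQ m n q) {c : Fin n → ℕ}
    (hc : c ∈ SInterval (ind (XQ m n q)) (YQ m n q)) : SolQ m n (suppN c) q := by
  rw [mem_SInterval_ind (XQ_sub_YQ h)] at hc
  refine ⟨fun j hm hj => ⟨fun hA => ?_, fun hA => ?_⟩, h.2⟩
  · obtain ⟨h1, h2⟩ := hA
    have := hc.2 _ h2
    simp only [YQ, Finset.mem_filter, Finset.mem_univ, true_and] at this
    exact this.2
  · by_contra hne
    apply hA
    refine ⟨hj, hc.1 ⟨j, hj⟩ ?_⟩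
    simp only [XQ, Finset.mem_filter, Finset.mem_univ, true_and]
    exact ⟨hm, hne⟩

theorem sub_MM {m n : ℕ} (hmn : m < n) {q : ℕ → Bool} (h : ValidQ m n q) :
    SInterval (ind (XQ m n q)) (YQ m n q) ⊆ MM n m := by
  intro c hc
  rw [mem_SInterval_ind (XQ_sub_YQ h)] at hc
  constructor
  · obtain ⟨j, h1, h2, h3⟩ := h.exists_X hmn
    intro h0
    apply hc.1 ⟨j, h2⟩
    · simp only [XQ, Finset.mem_filter, Finset.mem_univ, true_and]
      exact ⟨h1, h3⟩
    · rw [h0]; rfl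
  · rintro ⟨i, hi, hpos⟩
    have := hc.2 i (by omega)
    simp only [YQ, Finset.mem_filter, Finset.mem_univ, true_and] at this
    omega

theorem exists_mem_of_MM {m n : ℕ} {c : Fin n → ℕ} (hc : c ∈ MM n m) :
    ∃ j ∈ suppN c, m ≤ j ∧ j < n := by
  obtain ⟨h1, h2⟩ := hc
  obtain ⟨i, hi⟩ := Function.ne_iff.1 h1
  refine ⟨i, ⟨i.2, hi⟩, ?_, i.2⟩
  by_contra hlt
  exact h2 ⟨i, by omega, Nat.pos_of_ne_zero hi⟩

theorem cover_MM {m n : ℕ} {c : Fin n → ℕ} (hc : c ∈ MM n m) :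
    ∃ q, ValidQ m n q ∧ c ∈ SInterval (ind (XQ m n q)) (YQ m n q) := by
  obtain ⟨q, hq⟩ := exists_SolQ (exists_mem_of_MM hc)
  have hv : ValidQ m n q := by
    refine ⟨fun j hm hj hne => ?_, hq.2⟩
    by_cases hA : j ∈ suppN c
    · exact (hq.1 j hm hj).1 hA
    · exact absurd ((hq.1 j hm hj).2 hA) hne
  refine ⟨q, hv, ?_⟩
  rw [mem_SInterval_ind (XQ_sub_YQ hv)]
  constructor
  · intro i hi
    simp only [XQ, Finset.mem_filter, Finset.mem_univ, true_and] at hi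
    by_contra h0
    exact hi.2 ((hq.1 i hi.1 i.2).2 (fun ⟨_, h⟩ => h h0))
  · intro i hi
    have hm : m ≤ (i : ℕ) := by
      by_contra hlt
      exact hc.2 ⟨i, by omega, Nat.pos_of_ne_zero hi⟩
    simp only [YQ, Finset.mem_filter, Finset.mem_univ, true_and]
    exact ⟨hm, (hq.1 i hm i.2).1 ⟨i.2, hi⟩⟩

theorem lower {n m : ℕ} (hmn : m < n) :
    ∃ (r : ℕ), 0 < r ∧ ∃ (a : Fin r → Fin n → ℕ) (Z : Fin r → Finset (Fin n)),
    IsStanleyDecompOn Finset.univ (MM n m) a Z ∧ ∀ i, n - m - (n - m) / 2 ≤ (Z i).card := by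
  classical
  let P : Finset (Finset (Fin n) × Finset (Fin n)) :=
    Finset.univ.filter fun p => ∃ q, ValidQ m n q ∧ p = (XQ m n q, YQ m n q)
  have hP : ∀ p : P, ∃ q, ValidQ m n q ∧ p.1 = (XQ m n q, YQ m n q) :=
    fun p => (Finset.mem_filter.1 p.2).2
  have hP' : ∀ q, ValidQ m n q → (XQ m n q, YQ m n q) ∈ P := fun q hq =>
    Finset.mem_filter.2 ⟨Finset.mem_univ _, q, hq, rfl⟩
  have hcov : ∀ c ∈ MM n m, ∃ i : Fin P.card,
      c ∈ SInterval (ind (P.equivFin.symm i).1.1) (P.equivFin.symm i).1.2 := by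
    intro c hc
    obtain ⟨q, hq, hm⟩ := cover_MM hc
    refine ⟨P.equivFin ⟨_, hP' q hq⟩, ?_⟩
    simpa using hm
  refine ⟨P.card, ?_, fun i => ind (P.equivFin.symm i).1.1, fun i => (P.equivFin.symm i).1.2,
    ⟨fun i => Finset.subset_univ _, ?_, hcov, ?_⟩, ?_⟩
  · obtain ⟨i, -⟩ := hcov (Pi.single ⟨m, hmn⟩ 1) (by
      constructor
      · simp
      · rintro ⟨i, hi, hpos⟩
        have : i ≠ ⟨m, hmn⟩ := by rintro rfl; simp at hi
        simp [this] at hpos)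
    exact i.pos
  · intro i
    obtain ⟨q, hq, he⟩ := hP (P.equivFin.symm i)
    beta_reduce
    rw [he]
    exact sub_MM hmn hq
  · intro i j hij
    rw [Set.disjoint_left]
    intro c hci hcj
    apply hij
    apply P.equivFin.symm.injective
    apply Subtype.ext
    obtain ⟨q, hq, he⟩ := hP (P.equivFin.symm i)
    obtain ⟨q', hq', he'⟩ := hP (P.equivFin.symm j)
    beta_reduce at hci hcj
    rw [he] at hci ⊢
    rw [he'] at hcj ⊢
    have hA := exists_mem_of_MM (sub_MM hmn hq hci)
    have key := (SolQ_of_mem hq hci).unique (SolQ_of_mem hq' hcj) hA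
    refine Prod.ext ?_ ?_
    · ext x
      simp only [XQ, Finset.mem_filter, Finset.mem_univ, true_and]
      refine and_congr_right fun hx => ?_
      rw [key x hx x.2.le, key (x + 1) (by omega) x.2]
    · ext x
      simp only [YQ, Finset.mem_filter, Finset.mem_univ, true_and]
      refine and_congr_right fun hx => ?_
      rw [key x hx x.2.le]
  · intro i
    obtain ⟨q, hq, he⟩ := hP (P.equivFin.symm i)
    simp only [he]
    exact card_YQ hq hmn

theorem upper {n m : ℕ} (hmn : m < n) {r : ℕ} {a : Fin r → Fin n → ℕ}
    {Z : Fin r → Finset (Fin n)} (h : IsStanleyDecompOn Finset.univ (MM n m) a Z) {d : ℕ}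
    (hd : ∀ i, d ≤ (Z i).card) : d ≤ n - m - (n - m) / 2 := by
  classical
  obtain ⟨-, hsub, hcov, hdis⟩ := h
  have hself : ∀ i, a i ∈ SInterval (a i) (Z i) := fun i => ⟨le_rfl, fun _ _ => rfl⟩
  have hex : ∀ j : Fin n, ∃ i, m ≤ (j : ℕ) → a i = Pi.single j 1 := by
    intro j
    by_cases hj : m ≤ (j : ℕ)
    · obtain ⟨i, hi⟩ := hcov (Pi.single j 1) (by
        constructor
        · simp
        · rintro ⟨i, hi, hpos⟩
          have : i ≠ j := by rintro rfl; omega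
          simp [this] at hpos)
      refine ⟨i, fun _ => ?_⟩
      have hne := (hsub i (hself i)).1
      obtain ⟨l, hl⟩ := Function.ne_iff.1 hne
      have hle := hi.1
      have hother : ∀ t, t ≠ j → a i t = 0 := by
        intro t ht
        have := hle t
        simpa [ht] using this
      have hlj : l = j := by
        by_contra hc; exact hl (hother l hc)
      subst hlj
      funext t
      by_cases ht : t = l
      · subst ht
        have := hle t
        simp at this hl ⊢
        omega
      · simp [ht, hother t ht]
    · obtain ⟨i, -⟩ := hcov (Pi.single ⟨m, hmn⟩ 1) (by
        constructor
        · simp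
        · rintro ⟨i, hi, hpos⟩
          have : i ≠ ⟨m, hmn⟩ := by rintro rfl; simp at hi
          simp [this] at hpos)
      exact ⟨i, fun h => absurd h hj⟩
  choose f hf using hex
  let T : Finset (Fin n) := Finset.univ.filter fun j => m ≤ (j : ℕ)
  have hT : T.card = n - m := by
    have : T.map Fin.valEmbedding = Finset.Ico m n := by
      ext j
      simp only [T, Finset.mem_map, Finset.mem_filter, Finset.mem_univ, true_and,
        Finset.mem_Ico, Fin.valEmbedding_apply]
      constructor
      · rintro ⟨i, h1, rfl⟩; exact ⟨h1, i.2⟩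
      · rintro ⟨h1, h3⟩; exact ⟨⟨j, h3⟩, h1, rfl⟩
    rw [← Finset.card_map Fin.valEmbedding, this, Nat.card_Ico]
  have hadd : ∀ i, ∀ l ∈ Z i, a i + Pi.single l 1 ∈ SInterval (a i) (Z i) := by
    intro i l hl
    refine ⟨le_self_add, fun t ht => ?_⟩
    have : t ≠ l := by rintro rfl; exact ht hl
    simp [this]
  have hZT : ∀ i, Z i ⊆ T := by
    intro i l hl
    simp only [T, Finset.mem_filter, Finset.mem_univ, true_and]
    by_contra hlt
    exact (hsub i (hadd i l hl)).2 ⟨l, by omega, by simp⟩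
  let P : Finset (Fin n × Fin n) := T.offDiag.filter fun p => p.2 ∈ Z (f p.1)
  let P' : Finset (Fin n × Fin n) := T.offDiag.filter fun p => p.1 ∈ Z (f p.2)
  have hcard : P'.card = P.card := by
    refine Finset.card_bij' (fun p _ => p.swap) (fun p _ => p.swap) ?_ ?_
      (fun _ _ => rfl) (fun _ _ => rfl)
    · intro p hp
      simp only [P, P', Finset.mem_filter, Finset.mem_offDiag, Prod.fst_swap, Prod.snd_swap] at hp ⊢
      exact ⟨⟨hp.1.2.1, hp.1.1, hp.1.2.2.symm⟩, hp.2⟩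
    · intro p hp
      simp only [P, P', Finset.mem_filter, Finset.mem_offDiag, Prod.fst_swap, Prod.snd_swap] at hp ⊢
      exact ⟨⟨hp.1.2.1, hp.1.1, hp.1.2.2.symm⟩, hp.2⟩
  have hdisj : Disjoint P P' := by
    rw [Finset.disjoint_left]
    rintro ⟨j, l⟩ h1 h2
    simp only [P, P', Finset.mem_filter, Finset.mem_offDiag, T, Finset.mem_univ, true_and] at h1 h2
    obtain ⟨⟨hj, hl, hne⟩, h1⟩ := h1
    have h2 := h2.2
    have e1 := hadd _ _ h1
    have e2 := hadd _ _ h2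
    have hff : f j ≠ f l := by
      intro he
      have := hf j hj
      rw [he, hf l hl] at this
      have := congrFun this j
      simp [hne] at this
    refine Set.disjoint_left.1 (hdis _ _ hff) e1 ?_
    have e3 : a (f j) + Pi.single l 1 = a (f l) + Pi.single j 1 := by
      rw [hf j hj, hf l hl, add_comm]
    rw [e3]; exact e2
  have hle : P.card + P'.card ≤ T.offDiag.card := by
    rw [← Finset.card_union_of_disjoint hdisj]
    exact Finset.card_le_card (Finset.union_subset (Finset.filter_subset _ _)
      (Finset.filter_subset _ _))
  have hlow : T.card * (d - 1) ≤ P.card := by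
    have hsig : (T.sigma fun j => (Z (f j)).erase j).card ≤ P.card := by
      apply Finset.card_le_card_of_injOn (fun s => (s.1, s.2))
      · rintro ⟨j, l⟩ hs
        have hs := Finset.mem_sigma.1 (Finset.mem_coe.1 hs)
        have h2 := Finset.mem_erase.1 hs.2
        simp only [P, Finset.mem_coe, Finset.mem_filter, Finset.mem_offDiag]
        exact ⟨⟨hs.1, hZT _ h2.2, h2.1.symm⟩, h2.2⟩
      · rintro ⟨j, l⟩ _ ⟨j', l'⟩ _ he
        simp only [Prod.mk.injEq] at he
        obtain ⟨rfl, rfl⟩ := he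
        rfl
    refine le_trans ?_ hsig
    rw [Finset.card_sigma, ← smul_eq_mul]
    apply Finset.card_nsmul_le_sum
    intro j _
    exact le_trans (Nat.sub_le_sub_right (hd _) 1) Finset.pred_card_le_card_erase
  rw [Finset.offDiag_card, hcard, hT] at hle
  rw [hT] at hlow
  generalize n - m = k at *
  by_contra hlt
  obtain ⟨t, rfl⟩ : ∃ t, d = t + 1 := ⟨d - 1, by omega⟩
  simp only [Nat.add_sub_cancel] at hlow
  have hk : k < 2 * t + 1 := by omega
  have hk0 : 0 < k := by
    by_contra h0
    have : T.card = 0 := by omega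
    rw [Finset.card_eq_zero] at this
    have hm : (⟨m, hmn⟩ : Fin n) ∈ T := by simp [T]
    rw [this] at hm
    simp at hm
  have h5 : k + P.card + P.card ≤ k * k := by
    have : k ≤ k * k := Nat.le_mul_self k
    omega
  nlinarith

/-- `sdepth_S((x_1,...,x_n)/(x_1,...,x_m)) = n - m - ⌊(n-m)/2⌋`
for `0 ≤ m < n`. -/
theorem stmt_3 {n m : ℕ} (hmn : m < n) :
    sdepth ({c : Fin n → ℕ | c ≠ 0} \ {c | ∃ i : Fin n, (i : ℕ) < m ∧ 0 < c i}) =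
      n - m - (n - m) / 2 := by
  unfold sdepth sdepthOn
  apply IsGreatest.csSup_eq
  refine ⟨lower hmn, ?_⟩
  rintro d ⟨r, -, a, Z, h, hd⟩
  exact upper hmn h hd
end

section
/- Let 0 ≤ m ≤ n, let a_i ≥ 1 for 1 ≤ i ≤ n and b_i ≥ a_i for 1 ≤ i ≤ m be integers. Then sdepth_S((x_1^{a_1},...,x_n^{a_n})/(x_1^{b_1},...,x_m^{b_m})) = n - m - ⌊(n-m)/2⌋. -/
/-! ### A partition of the nonempty subsets of an odd cycle -/

theorem cyc_reach (k : ℕ) (i j : Fin (2 * k + 1)) :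
    ∃ g : ℕ, (finRotate (2 * k + 1))^[g + 1] i = j := by
  have h : ∀ g : ℕ, (finRotate (2 * k + 1))^[g] i = i + (Fin.ofNat (2 * k + 1) g) := by
    intro g
    induction g with
    | zero => simp
    | succ g ih =>
      rw [Function.iterate_succ_apply', ih, finRotate_apply]
      ext
      simp [Fin.val_add]
      ring_nf
  refine ⟨((j - i : Fin (2 * k + 1)) : ℕ) + 2 * k, ?_⟩
  rw [h]
  have : Fin.ofNat (2 * k + 1) (((j - i : Fin (2 * k + 1)) : ℕ) + 2 * k + 1) = j - i := by
    ext
    simp [Nat.add_assoc, Nat.mod_eq_of_lt (j - i).isLt]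
  rw [this]
  abel

/-- `F` is the set of free positions belonging to `T`: the tiling of the cycle by monomers
(in `T`) and dimers (free, not in `T`). -/
def IsFree {α : Type*} (σ : Equiv.Perm α) (T F : Finset α) : Prop :=
  ∀ i, i ∈ F ↔ (σ i ∉ T ∧ σ i ∉ F)

theorem isFree_card {α : Type*} [Fintype α] [DecidableEq α] (σ : Equiv.Perm α) (T F : Finset α)
    (h : IsFree σ T F) : F.card + (T ∪ F).card = Fintype.card α := by
  have : F.map σ.toEmbedding = (T ∪ F)ᶜ := by
    ext x
    simp only [Finset.mem_map_equiv, Finset.mem_compl, Finset.mem_union, not_or]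
    rw [h]
    simp
  rw [← Finset.card_map σ.toEmbedding, this, Finset.card_compl]
  have := Finset.card_le_univ (T ∪ F)
  omega

theorem isFree_unique {α : Type*} (σ : Equiv.Perm α)
    (hσ : ∀ i j, ∃ g : ℕ, σ^[g + 1] i = j) (T F F' : Finset α) (hT : T.Nonempty)
    (h : IsFree σ T F) (h' : IsFree σ T F') : F = F' := by
  have key : ∀ g : ℕ, ∀ i, σ^[g + 1] i ∈ T → (i ∈ F ↔ i ∈ F') := by
    intro g
    induction g with
    | zero =>
      intro i hi
      have hi' : σ i ∈ T := hi
      rw [h i, h' i]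
      tauto
    | succ g ih =>
      intro i hi
      rw [Function.iterate_succ_apply] at hi
      rw [h i, h' i, ih _ hi]
  obtain ⟨t, ht⟩ := hT
  ext i
  obtain ⟨g, hg⟩ := hσ i t
  exact key g i (hg ▸ ht)

theorem isFree_exists {α : Type*} [Fintype α] (σ : Equiv.Perm α)
    (hσ : ∀ i j, ∃ g : ℕ, σ^[g + 1] i = j) (T : Finset α) (hT : T.Nonempty) :
    ∃ F, IsFree σ T F := by
  classical
  obtain ⟨t, ht⟩ := hT
  have ex : ∀ i, ∃ g : ℕ, σ^[g + 1] i ∈ T := fun i => by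
    obtain ⟨g, hg⟩ := hσ i t
    exact ⟨g, hg ▸ ht⟩
  refine ⟨Finset.univ.filter fun i => Odd (Nat.find (ex i)), ?_⟩
  intro i
  simp only [Finset.mem_filter, Finset.mem_univ, true_and]
  by_cases hi : σ i ∈ T
  · have : Nat.find (ex i) = 0 := by
      rw [Nat.find_eq_zero]
      exact hi
    rw [this]
    simp only [hi, not_true, false_and, iff_false]
    decide
  · have : Nat.find (ex i) = Nat.find (ex (σ i)) + 1 := by
      rw [Nat.find_eq_iff]
      refine ⟨?_, ?_⟩
      · rw [Function.iterate_succ_apply]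
        exact Nat.find_spec (ex (σ i))
      · intro g hg
        cases g with
        | zero => exact hi
        | succ g =>
          rw [Function.iterate_succ_apply]
          exact Nat.find_min (ex (σ i)) (by omega)
    rw [this, Nat.odd_add_one]
    tauto

theorem core (k : ℕ) : ∃ Φ : Finset (Fin (2 * k + 1)) → Finset (Fin (2 * k + 1)),
    ∀ T, T.Nonempty → k + 1 ≤ (T ∪ Φ T).card ∧
      ∀ T', (∀ i, i ∉ Φ T → (i ∈ T' ↔ i ∈ T)) → T'.Nonempty ∧ Φ T' = Φ T := by
  classical
  have hσ := cyc_reach k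
  set σ := finRotate (2 * k + 1)
  have hex : ∀ T : Finset (Fin (2 * k + 1)), ∃ F, T.Nonempty → IsFree σ T F := by
    intro T
    by_cases hT : T.Nonempty
    · obtain ⟨F, hF⟩ := isFree_exists σ hσ T hT
      exact ⟨F, fun _ => hF⟩
    · exact ⟨∅, fun h => absurd h hT⟩
  choose Φ hΦ using hex
  refine ⟨Φ, fun T hT => ⟨?_, ?_⟩⟩
  · have h1 := isFree_card σ T _ (hΦ T hT)
    have h2 : (Φ T).card ≤ (T ∪ Φ T).card := Finset.card_le_card Finset.subset_union_right
    simp only [Fintype.card_fin] at h1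
    omega
  · intro T' hT'
    have hF : IsFree σ T' (Φ T) := by
      intro i
      rw [hΦ T hT i]
      by_cases h : σ i ∈ Φ T
      · simp [h]
      · rw [hT' _ h]
    have hne : T'.Nonempty := by
      by_contra hne
      rw [Finset.not_nonempty_iff_eq_empty] at hne
      have h1 := isFree_card σ T' _ hF
      rw [hne] at h1
      simp only [Finset.empty_union, Fintype.card_fin] at h1
      omega
    exact ⟨hne, isFree_unique σ hσ T' _ _ hne (hΦ T' hne) hF⟩

/-! ### From canonical intervals to Stanley decompositions -/

theorem decomp_of_fun {n : ℕ} (M : Set (Fin n → ℕ)) (hM : M.Nonempty) (d : ℕ)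
    (s : (Fin n → ℕ) → Fin n → ℕ) (Z : (Fin n → ℕ) → Finset (Fin n)) (u : Fin n → ℕ)
    (hu : ∀ c ∈ M, s c ≤ u) (hself : ∀ c ∈ M, c ∈ SInterval (s c) (Z c))
    (hinv : ∀ c ∈ M, ∀ c' ∈ SInterval (s c) (Z c), c' ∈ M ∧ s c' = s c ∧ Z c' = Z c)
    (hd : ∀ c ∈ M, d ≤ (Z c).card) :
    ∃ (r : ℕ), 0 < r ∧ ∃ (a : Fin r → Fin n → ℕ) (Z : Fin r → Finset (Fin n)),
      IsStanleyDecompOn Finset.univ M a Z ∧ ∀ i, d ≤ (Z i).card := by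
  classical
  set R : Set ((Fin n → ℕ) × Finset (Fin n)) := (fun c => (s c, Z c)) '' M with hR
  have hfin : R.Finite := by
    refine Set.Finite.subset ((Set.finite_Iic u).prod (Set.finite_univ)) ?_
    rintro _ ⟨c, hc, rfl⟩
    exact ⟨hu c hc, trivial⟩
  have := hfin.fintype
  let e := Fintype.equivFin R
  have hmem : ∀ i, ∃ c ∈ M, s c = (e.symm i).1.1 ∧ Z c = (e.symm i).1.2 := by
    intro i
    obtain ⟨c, hc, h⟩ := (e.symm i).2
    exact ⟨c, hc, congrArg Prod.fst h, congrArg Prod.snd h⟩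
  refine ⟨Fintype.card R, ?_, fun i => (e.symm i).1.1, fun i => (e.symm i).1.2, ?_, ?_⟩
  · obtain ⟨c, hc⟩ := hM
    exact Fintype.card_pos_iff.2 ⟨⟨_, c, hc, rfl⟩⟩
  · refine ⟨fun i => Finset.subset_univ _, ?_, ?_, ?_⟩
    · intro i x hx
      obtain ⟨c, hc, h1, h2⟩ := hmem i
      simp only [← h1, ← h2] at hx
      exact (hinv c hc x hx).1
    · intro x hx
      refine ⟨e ⟨_, x, hx, rfl⟩, ?_⟩
      simpa using hself x hx
    · intro i j hij
      rw [Set.disjoint_left]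
      intro x hx hx'
      apply hij
      obtain ⟨c, hc, h1, h2⟩ := hmem i
      obtain ⟨c', hc', h1', h2'⟩ := hmem j
      simp only [← h1, ← h2] at hx
      simp only [← h1', ← h2'] at hx'
      obtain ⟨-, p, q⟩ := hinv c hc x hx
      obtain ⟨-, p', q'⟩ := hinv c' hc' x hx'
      apply e.symm.injective
      apply Subtype.ext
      apply Prod.ext
      · rw [← h1, ← h1', ← p, ← p']
      · rw [← h2, ← h2', ← q, ← q']
  · intro i
    obtain ⟨c, hc, h1, h2⟩ := hmem i
    simp only [← h2]
    exact hd c hc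

theorem lower_bound {n m m' k : ℕ} (hm : m ≤ m') (hm' : m' ≤ m + 1) (hn : n = m' + (2 * k + 1))
    (a b : Fin n → ℕ) (ha : ∀ i, 1 ≤ a i)
    (hab : ∀ i : Fin n, (i : ℕ) < m → a i ≤ b i) :
    ∃ (r : ℕ), 0 < r ∧ ∃ (a' : Fin r → Fin n → ℕ) (Z : Fin r → Finset (Fin n)),
      IsStanleyDecompOn Finset.univ ({c : Fin n → ℕ | ∃ i, a i ≤ c i} \
        {c | ∃ i : Fin n, (i : ℕ) < m ∧ b i ≤ c i}) a' Z ∧ ∀ i, k + 1 ≤ (Z i).card := by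
  classical
  obtain ⟨Φ, hΦ⟩ := core k
  let e : Fin (2 * k + 1) ↪ Fin n :=
    ⟨fun j => ⟨m' + j, by omega⟩, fun x y h => by
      have := congrArg Fin.val h
      ext
      simpa using this⟩
  have he : ∀ j, ((e j : Fin n) : ℕ) = m' + j := fun j => rfl
  let T : (Fin n → ℕ) → Finset (Fin (2 * k + 1)) := fun c =>
    Finset.univ.filter fun j => a (e j) ≤ c (e j)
  let E : (Fin n → ℕ) → Prop := fun c => ∃ i : Fin n, (i : ℕ) < m' ∧ a i ≤ c i
  let G : (Fin n → ℕ) → Finset (Fin (2 * k + 1)) := fun c =>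
    if E c then Finset.univ else Φ (T c)
  let F : (Fin n → ℕ) → Finset (Fin n) := fun c => (G c).map e
  let s : (Fin n → ℕ) → Fin n → ℕ := fun c i =>
    if (i : ℕ) < m then c i else if i ∈ F c then 0 else min (c i) (a i)
  let Z : (Fin n → ℕ) → Finset (Fin n) := fun c =>
    Finset.univ.filter fun i => m ≤ (i : ℕ) ∧ (i ∈ F c ∨ a i ≤ c i)
  have hF : ∀ c i, i ∈ F c → m' ≤ (i : ℕ) := by
    intro c i hi
    obtain ⟨j, -, rfl⟩ := Finset.mem_map.1 hi
    rw [he]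
    omega
  have hTne : ∀ c, (∃ i, a i ≤ c i) → ¬ E c → (T c).Nonempty := by
    rintro c ⟨i, hi⟩ hE
    have him : ¬ (i : ℕ) < m' := fun h => hE ⟨i, h, hi⟩
    refine ⟨⟨i - m', by omega⟩, ?_⟩
    have : e ⟨i - m', by omega⟩ = i := by
      ext
      rw [he]
      simp only
      omega
    simp only [T, Finset.mem_filter, Finset.mem_univ, true_and, this, hi]
  refine decomp_of_fun _ ?_ (k + 1) s Z (a + b) ?_ ?_ ?_ ?_
  · refine ⟨fun i => if (i : ℕ) < m then 0 else a i, ⟨e 0, ?_⟩, ?_⟩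
    · have : ¬ ((e 0 : Fin n) : ℕ) < m := by
        rw [he]
        omega
      simp [this]
    · rintro ⟨i, hi, hb⟩
      have h1 := ha i
      have h2 := hab i hi
      simp [hi] at hb
      omega
  · rintro c ⟨-, hc⟩ i
    simp only [s, Pi.add_apply]
    split_ifs with h1 h2
    · have : ¬ b i ≤ c i := fun h => hc ⟨i, h1, h⟩
      omega
    · omega
    · omega
  · rintro c -
    refine ⟨fun i => ?_, fun i hi => ?_⟩
    · simp only [s]
      split_ifs <;> omega
    · simp only [Z, Finset.mem_filter, Finset.mem_univ, true_and, not_and, not_or] at hi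
      simp only [s]
      split_ifs with h1 h2
      · rfl
      · exact absurd h2 (hi (by omega)).1
      · have := (hi (by omega)).2
        omega
  · rintro c ⟨hc1, hc2⟩ c' ⟨hle, hz⟩
    have A1 : ∀ i : Fin n, (i : ℕ) < m → c' i = c i := by
      intro i hi
      rw [hz i (by simp [Z]; omega)]
      simp [s, hi]
    have A2 : ∀ i : Fin n, i ∉ F c → ((a i ≤ c' i ↔ a i ≤ c i) ∧
        min (c' i) (a i) = min (c i) (a i)) := by
      intro i hi
      by_cases him : (i : ℕ) < m
      · rw [A1 i him]
        simp
      · by_cases hac : a i ≤ c i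
        · have := hle i
          simp only [s, him, hi, if_false] at this
          omega
        · have := hz i (by simp [Z, hi]; omega)
          simp only [s, him, hi, if_false] at this
          omega
    have hE : E c' ↔ E c := by
      refine exists_congr fun i => and_congr_right fun hi => (A2 i ?_).1
      intro h
      have := hF c i h
      omega
    have hGJ : G c' = G c ∧ ∃ i, a i ≤ c' i := by
      by_cases h : E c
      · have h' := hE.2 h
        refine ⟨by simp only [G, h, h', if_true], ?_⟩
        obtain ⟨i, -, hi⟩ := h'
        exact ⟨i, hi⟩
      · have h' : ¬ E c' := fun q => h (hE.1 q)
        have := (hΦ (T c) (hTne c hc1 h)).2 (T c') (by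
          intro j hj
          simp only [T, Finset.mem_filter, Finset.mem_univ, true_and]
          refine (A2 (e j) ?_).1
          simp only [F, G, h, if_false, Finset.mem_map']
          exact hj)
        refine ⟨by simp only [G, h, h', if_false, this.2], ?_⟩
        obtain ⟨j, hj⟩ := this.1
        simp only [T, Finset.mem_filter, Finset.mem_univ, true_and] at hj
        exact ⟨_, hj⟩
    have hFF : F c' = F c := by simp only [F, hGJ.1]
    refine ⟨⟨hGJ.2, ?_⟩, ?_, ?_⟩
    · rintro ⟨i, hi, hb⟩
      exact hc2 ⟨i, hi, A1 i hi ▸ hb⟩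
    · funext i
      simp only [s, hFF]
      split_ifs with h1 h2
      · exact A1 i h1
      · rfl
      · exact (A2 i h2).2
    · ext i
      simp only [Z, hFF, Finset.mem_filter, Finset.mem_univ, true_and]
      refine and_congr_right fun _ => ?_
      by_cases h : i ∈ F c
      · simp [h]
      · simp [h, (A2 i h).1]
  · rintro c ⟨hc1, hc2⟩
    by_cases h : E c
    · have hsub : F c ⊆ Z c := by
        intro i hi
        simp only [Z, Finset.mem_filter, Finset.mem_univ, true_and]
        exact ⟨hm.trans (hF c i hi), Or.inl hi⟩
      have := Finset.card_le_card hsub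
      simp only [F, G, h, if_true, Finset.card_map, Finset.card_univ, Fintype.card_fin] at this
      omega
    · have hsub : (T c ∪ Φ (T c)).map e ⊆ Z c := by
        intro i hi
        obtain ⟨j, hj, rfl⟩ := Finset.mem_map.1 hi
        simp only [Z, Finset.mem_filter, Finset.mem_univ, true_and]
        refine ⟨by rw [he]; omega, ?_⟩
        rcases Finset.mem_union.1 hj with hj | hj
        · right
          simpa [T] using hj
        · left
          simp only [F, G, h, if_false, Finset.mem_map']
          exact hj
      have := Finset.card_le_card hsub
      rw [Finset.card_map] at this
      exact (hΦ (T c) (hTne c hc1 h)).1.trans this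

theorem upper_bound {n m : ℕ} (hmn : m ≤ n) (a b : Fin n → ℕ) (ha : ∀ i, 1 ≤ a i)
    (hab : ∀ i : Fin n, (i : ℕ) < m → a i ≤ b i) (d r : ℕ) (hr : 0 < r)
    (a' : Fin r → Fin n → ℕ) (Z : Fin r → Finset (Fin n))
    (hdec : IsStanleyDecompOn Finset.univ ({c : Fin n → ℕ | ∃ i, a i ≤ c i} \
        {c | ∃ i : Fin n, (i : ℕ) < m ∧ b i ≤ c i}) a' Z) (hd : ∀ i, d ≤ (Z i).card) :
    d ≤ n - m - (n - m) / 2 := by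
  classical
  obtain ⟨-, hsub, hcov, hdisj⟩ := hdec
  let W : Finset (Fin n) := Finset.univ.filter fun i => m ≤ (i : ℕ)
  have hWc : W.card = n - m := by
    have h1 : W.map Fin.valEmbedding = Finset.Ico m n := by
      ext x
      simp only [W, Finset.mem_map, Finset.mem_filter, Finset.mem_univ, true_and,
        Fin.valEmbedding_apply, Finset.mem_Ico]
      constructor
      · rintro ⟨i, hi, rfl⟩
        exact ⟨hi, i.isLt⟩
      · rintro ⟨h1, h2⟩
        exact ⟨⟨x, h2⟩, h1, rfl⟩
    rw [← Finset.card_map Fin.valEmbedding, h1, Nat.card_Ico]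
  -- the free variables are never among the first `m` ones
  have hZW : ∀ p, Z p ⊆ W := by
    intro p i hi
    by_contra hiW
    have him : (i : ℕ) < m := by
      simpa [W] using hiW
    have : (fun j => if j = i then a' p i + b i else a' p j) ∈ SInterval (a' p) (Z p) := by
      refine ⟨fun j => ?_, fun j hj => ?_⟩
      · by_cases h : j = i
        · subst h
          simp
        · simp [h]
      · have : j ≠ i := fun h => hj (h ▸ hi)
        simp [this]
    exact (hsub p this).2 ⟨i, him, by simp⟩
  rcases Nat.eq_zero_or_pos (n - m) with h0 | hpos
  · have h1 := hd ⟨0, hr⟩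
    have h2 := Finset.card_le_card (hZW ⟨0, hr⟩)
    omega
  let g : Fin n → Fin n → ℕ := fun i => Pi.single i (a i)
  have hgM : ∀ i ∈ W, g i ∈ ({c : Fin n → ℕ | ∃ i, a i ≤ c i} \
        {c | ∃ i : Fin n, (i : ℕ) < m ∧ b i ≤ c i}) := by
    intro i hi
    refine ⟨⟨i, by simp [g]⟩, ?_⟩
    rintro ⟨j, hj, hb⟩
    have hne : j ≠ i := by
      rintro rfl
      simp [W] at hi
      omega
    have h1 := ha j
    have h2 := hab j hj
    simp [g, hne] at hb
    omega
  have hp : ∀ i : Fin n, ∃ p, i ∈ W → g i ∈ SInterval (a' p) (Z p) := by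
    intro i
    by_cases hi : i ∈ W
    · obtain ⟨p, hp⟩ := hcov _ (hgM i hi)
      exact ⟨p, fun _ => hp⟩
    · exact ⟨⟨0, hr⟩, fun h => absurd h hi⟩
  choose p hp using hp
  have hstart : ∀ i ∈ W, a' (p i) = g i := by
    intro i hi
    obtain ⟨hle, -⟩ := hp i hi
    have hmem : a' (p i) ∈ SInterval (a' (p i)) (Z (p i)) := ⟨le_rfl, fun _ _ => rfl⟩
    obtain ⟨⟨j, hj⟩, -⟩ := hsub _ hmem
    have hji : j = i := by
      by_contra hne
      have h1 := ha j
      have h2 := hle j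
      simp [g, hne] at h2
      omega
    subst hji
    funext l
    by_cases hl : l = j
    · subst hl
      have := hle l
      simp [g] at this ⊢
      omega
    · have := hle l
      simp [g, hl] at this ⊢
      omega
  -- the tournament relation is antisymmetric
  have hanti : ∀ i ∈ W, ∀ j ∈ W, i ≠ j → j ∈ Z (p i) → i ∉ Z (p j) := by
    intro i hi j hj hij h1 h2
    have hpp : p i ≠ p j := by
      intro h
      have h3 := hstart i hi
      rw [h, hstart j hj] at h3
      have h4 := congrFun h3 i
      have := ha i
      simp [g, hij] at h4
      omega
    have key : ∀ i j, i ∈ W → j ∈ Z (p i) → g i + g j ∈ SInterval (a' (p i)) (Z (p i)) := by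
      intro i j hi hj
      rw [hstart i hi]
      refine ⟨fun l => by simp, fun l hl => ?_⟩
      have : l ≠ j := fun h => hl (h ▸ hj)
      simp [g, this]
    have k1 := key i j hi h1
    have k2 := key j i hj h2
    rw [add_comm] at k2
    exact Set.disjoint_left.1 (hdisj _ _ hpp) k1 k2
  let P : Finset (Fin n × Fin n) := W.offDiag.filter fun q => q.2 ∈ Z (p q.1)
  have hPcard : (n - m) * (d - 1) ≤ P.card := by
    have : P.card = ∑ i ∈ W, (P.filter fun q => q.1 = i).card :=
      Finset.card_eq_sum_card_fiberwise (fun q hq => by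
        have hq' : q ∈ P := hq
        simp only [P, Finset.mem_filter, Finset.mem_offDiag] at hq'
        exact hq'.1.1)
    rw [this, ← hWc, ← smul_eq_mul]
    refine Finset.card_nsmul_le_sum _ _ _ fun i hi => ?_
    have hs : ((Z (p i)).erase i).map ⟨fun j => (i, j), fun x y h => by simpa using h⟩ ⊆
        P.filter fun q => q.1 = i := by
      intro q hq
      obtain ⟨j, hj, rfl⟩ := Finset.mem_map.1 hq
      rw [Finset.mem_erase] at hj
      simp only [P, Finset.mem_filter, Finset.mem_offDiag, Function.Embedding.coeFn_mk]
      exact ⟨⟨⟨hi, hZW _ hj.2, hj.1.symm⟩, hj.2⟩, rfl⟩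
    have h1 := Finset.card_le_card hs
    rw [Finset.card_map] at h1
    have h2 := Finset.pred_card_le_card_erase (s := Z (p i)) (a := i)
    have h3 := hd (p i)
    omega
  have hP2 : 2 * P.card ≤ (n - m) * (n - m - 1) := by
    have hdj : Disjoint P (P.map (Equiv.prodComm _ _).toEmbedding) := by
      rw [Finset.disjoint_left]
      rintro ⟨i, j⟩ h1 h2
      simp only [Finset.mem_map_equiv, Equiv.prodComm_symm, Equiv.prodComm_apply,
        Prod.swap_prod_mk, P, Finset.mem_filter, Finset.mem_offDiag] at h1 h2
      exact hanti i h1.1.1 j h1.1.2.1 h1.1.2.2 h1.2 h2.2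
    have hss : P ∪ P.map (Equiv.prodComm _ _).toEmbedding ⊆ W.offDiag := by
      rintro ⟨i, j⟩ h
      rcases Finset.mem_union.1 h with h | h
      · exact (Finset.mem_filter.1 h).1
      · simp only [Finset.mem_map_equiv, Equiv.prodComm_symm, Equiv.prodComm_apply,
          Prod.swap_prod_mk, P, Finset.mem_filter, Finset.mem_offDiag] at h
        exact Finset.mem_offDiag.2 ⟨h.1.2.1, h.1.1, h.1.2.2.symm⟩
    have h1 := Finset.card_le_card hss
    rw [Finset.card_union_of_disjoint hdj, Finset.card_map, Finset.offDiag_card, hWc] at h1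
    rw [Nat.mul_sub, mul_one]
    omega
  have h3 : (n - m) * (2 * (d - 1)) ≤ (n - m) * (n - m - 1) := by
    calc (n - m) * (2 * (d - 1)) = 2 * ((n - m) * (d - 1)) := by ring
      _ ≤ 2 * P.card := by omega
      _ ≤ _ := hP2
  have h4 := Nat.le_of_mul_le_mul_left h3 hpos
  omega

/-- `sdepth_S((x_1^{a_1},...,x_n^{a_n})/(x_1^{b_1},...,x_m^{b_m}))
= n - m - ⌊(n-m)/2⌋` for `0 ≤ m ≤ n`, `a_i ≥ 1`, `b_i ≥ a_i`. -/
theorem stmt_7 {n m : ℕ} (hmn : m ≤ n) (a b : Fin n → ℕ) (ha : ∀ i, 1 ≤ a i)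
    (hab : ∀ i : Fin n, (i : ℕ) < m → a i ≤ b i) :
    sdepth ({c : Fin n → ℕ | ∃ i, a i ≤ c i} \
        {c | ∃ i : Fin n, (i : ℕ) < m ∧ b i ≤ c i}) =
      n - m - (n - m) / 2 := by
  unfold sdepth sdepthOn
  have hub : ∀ d ∈ {d | ∃ (r : ℕ), 0 < r ∧ ∃ (a' : Fin r → Fin n → ℕ)
      (Z : Fin r → Finset (Fin n)),
      IsStanleyDecompOn Finset.univ ({c : Fin n → ℕ | ∃ i, a i ≤ c i} \
        {c | ∃ i : Fin n, (i : ℕ) < m ∧ b i ≤ c i}) a' Z ∧ ∀ i, d ≤ (Z i).card},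
      d ≤ n - m - (n - m) / 2 := by
    rintro d ⟨r, hr, a', Z, h1, h2⟩
    exact upper_bound hmn a b ha hab d r hr a' Z h1 h2
  apply le_antisymm
  · exact csSup_le' hub
  · rcases Nat.eq_zero_or_pos (n - m) with h0 | hpos
    · simp [h0]
    · apply le_csSup ⟨_, hub⟩
      rcases Nat.even_or_odd' (n - m) with ⟨k, hk | hk⟩
      · have h := lower_bound (n := n) (m := m) (m' := m + 1) (k := k - 1) (by omega) le_rfl
          (by omega) a b ha hab
        have e : k - 1 + 1 = n - m - (n - m) / 2 := by omega
        rw [e] at h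
        exact h
      · have h := lower_bound (n := n) (m := m) (m' := m) (k := k) le_rfl (by omega)
          (by omega) a b ha hab
        have e : k + 1 = n - m - (n - m) / 2 := by omega
        rw [e] at h
        exact h
end
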